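/- arXiv:1612.00677 — 5 statements merged into one kernel-verified Lean document; each statement's English description precedes it below -/
import Mathlib

section
/- Let N be a positive integer, let P₀, S ∈ ℝ^{N×N} be symmetric positive semidefinite, and let t ≥ 0. Then the matrix (I + t·P₀S)⁻¹P₀ is symmetric positive semidefinite. -/
open Matrix

/-- If `P₀` and `S` are symmetric positive semidefinite and `t ≥ 0`, then the
value `(I + t·P₀S)⁻¹ P₀` of the closed-form solution of `Ṗ = −PSP` is
symmetric positive semidefinite. -/
theorem nonlinear_subproblem_solution_posSemidef
    (N : ℕ) (hN : 0 < N) (P₀ S : Matrix (Fin N) (Fin N) ℝ)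
    (hP₀ : P₀.PosSemidef) (hS : S.PosSemidef) (t : ℝ) (ht : 0 ≤ t) :
    ((1 + t • (P₀ * S))⁻¹ * P₀).PosSemidef := by
  obtain ⟨B, hB⟩ : ∃ B : Matrix (Fin N) (Fin N) ℝ, P₀ = Bᴴ * B := by
    open scoped MatrixOrder in
    exact CStarAlgebra.nonneg_iff_eq_star_mul_self.mp hP₀.nonneg
  have hG : (1 + t • (B * S * Bᴴ)).PosDef :=
    PosDef.one.add_posSemidef ((hS.mul_mul_conjTranspose_same B).smul ht)
  have hA : IsUnit (1 + t • (P₀ * S)).det := by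
    have h1 : (1 + t • (P₀ * S)).det = (1 + t • (B * S * Bᴴ)).det := by
      have := det_one_add_mul_comm Bᴴ (t • (B * S))
      rw [hB]
      simpa [Matrix.mul_assoc] using this
    rw [h1]
    exact (isUnit_iff_isUnit_det _).mp hG.isUnit
  have hGu := (isUnit_iff_isUnit_det _).mp hG.isUnit
  have hc : (1 + t • (P₀ * S)) * Bᴴ = Bᴴ * (1 + t • (B * S * Bᴴ)) := by
    rw [hB]
    simp [Matrix.mul_add, Matrix.add_mul, Matrix.mul_assoc]
  have key : (1 + t • (P₀ * S))⁻¹ * P₀ = Bᴴ * (1 + t • (B * S * Bᴴ))⁻¹ * B := by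
    have h2 : P₀ = (1 + t • (P₀ * S)) * (Bᴴ * (1 + t • (B * S * Bᴴ))⁻¹ * B) := by
      rw [← Matrix.mul_assoc, ← Matrix.mul_assoc, hc, Matrix.mul_assoc Bᴴ,
        Matrix.mul_nonsing_inv _ hGu, Matrix.mul_one, ← hB]
    calc (1 + t • (P₀ * S))⁻¹ * P₀
        = (1 + t • (P₀ * S))⁻¹ * ((1 + t • (P₀ * S)) *
            (Bᴴ * (1 + t • (B * S * Bᴴ))⁻¹ * B)) := by rw [← h2]
      _ = _ := Matrix.nonsing_inv_mul_cancel_left _ _ hA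
  rw [key]
  exact hG.inv.posSemidef.conjTranspose_mul_mul_same B
end

section
/- Let N, r be positive integers, let Z ∈ ℝ^{N×r}, let S ∈ ℝ^{N×N} be symmetric positive semidefinite, and let h ≥ 0. Then the r×r matrix I_r + h·ZᵀSZ is symmetric positive definite (in particular invertible), the N×N matrix I_N + h·ZZᵀS is invertible, and (I_N + h·ZZᵀS)⁻¹ · ZZᵀ = Z · (I_r + h·ZᵀSZ)⁻¹ · Zᵀ. -/
open Matrix

/-- Low-rank formulation in the `ZZᵀ` setting: for `S` symmetric positive
semidefinite and `h ≥ 0`, the matrix `I_r + h·ZᵀSZ` is symmetric positive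
definite (in particular invertible), `I_N + h·ZZᵀS` is invertible, and
`(I_N + h·ZZᵀS)⁻¹ · ZZᵀ = Z · (I_r + h·ZᵀSZ)⁻¹ · Zᵀ`. -/
theorem woodbury_zz
    (N r : ℕ) (hN : 0 < N) (hr : 0 < r)
    (Z : Matrix (Fin N) (Fin r) ℝ) (S : Matrix (Fin N) (Fin N) ℝ)
    (hS : S.PosSemidef) (h : ℝ) (hh : 0 ≤ h) :
    (1 + h • (Zᵀ * S * Z)).PosDef ∧
      IsUnit (1 + h • (Z * Zᵀ * S)) ∧
      (1 + h • (Z * Zᵀ * S))⁻¹ * (Z * Zᵀ)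
        = Z * (1 + h • (Zᵀ * S * Z))⁻¹ * Zᵀ := by
  have hP : (1 + h • (Zᵀ * S * Z)).PosDef := by
    have h1 := hS.conjTranspose_mul_mul_same Z
    rw [conjTranspose_eq_transpose_of_trivial] at h1
    exact PosDef.one.add_posSemidef (h1.smul hh)
  have hB : IsUnit (1 + h • (Zᵀ * S * Z)).det := (isUnit_iff_isUnit_det _).1 hP.isUnit
  have hA : IsUnit (1 + h • (Z * Zᵀ * S)).det := by
    have e : (1 + h • (Z * Zᵀ * S)).det = (1 + h • (Zᵀ * S * Z)).det := by
      have := det_one_add_mul_comm Z (h • (Zᵀ * S))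
      simpa [Matrix.mul_assoc] using this
    rw [e]; exact hB
  refine ⟨hP, (isUnit_iff_isUnit_det _).2 hA, ?_⟩
  have key : (1 + h • (Z * Zᵀ * S)) * Z = Z * (1 + h • (Zᵀ * S * Z)) := by
    simp [Matrix.add_mul, Matrix.mul_add, Matrix.mul_assoc]
  have e2 : Z * Zᵀ = (1 + h • (Z * Zᵀ * S)) * (Z * (1 + h • (Zᵀ * S * Z))⁻¹ * Zᵀ) := by
    rw [← Matrix.mul_assoc, ← Matrix.mul_assoc, key, Matrix.mul_assoc Z, mul_nonsing_inv _ hB,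
      Matrix.mul_one]
  calc _ = (1 + h • (Z * Zᵀ * S))⁻¹ *
        ((1 + h • (Z * Zᵀ * S)) * (Z * (1 + h • (Zᵀ * S * Z))⁻¹ * Zᵀ)) := by rw [← e2]
    _ = _ := nonsing_inv_mul_cancel_left _ _ hA
end

section
/- Let N, r, r_Q be positive integers, let A, S ∈ ℝ^{N×N}, let L ∈ ℝ^{N×r}, D ∈ ℝ^{r×r}, L_Q ∈ ℝ^{N×r_Q}, D_Q ∈ ℝ^{r_Q×r_Q}, and set P = LDLᵀ and Q = L_Q D_Q L_Qᵀ. Then the right-hand side of the differential Riccati equation admits the low-rank factorization AᵀP + PA + Q − PSP = L̃·D̃·L̃ᵀ, where L̃ = [AᵀL L L_Q] ∈ ℝ^{N×(2r+r_Q)} is the block matrix with column blocks AᵀL, L, L_Q, and D̃ ∈ ℝ^{(2r+r_Q)×(2r+r_Q)} is the block matrix with blocks D̃₁₂ = D̃₂₁ = D, D̃₂₂ = −D·LᵀSL·D, D̃₃₃ = D_Q, and all other blocks zero. -/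
open Matrix

/-- Low-rank factorization of the Riccati right-hand side: with `P = LDLᵀ` and
`Q = L_Q D_Q L_Qᵀ`, one has `AᵀP + PA + Q − PSP = L̃·D̃·L̃ᵀ` where
`L̃ = [AᵀL  L  L_Q]` and `D̃` has blocks `D̃₁₂ = D̃₂₁ = D`, `D̃₂₂ = −D·LᵀSL·D`,
`D̃₃₃ = D_Q`, and all other blocks zero. -/
theorem riccati_rhs_lowrank_factorization
    (N r rQ : ℕ) (hN : 0 < N) (hr : 0 < r) (hrQ : 0 < rQ)
    (A S : Matrix (Fin N) (Fin N) ℝ)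
    (L : Matrix (Fin N) (Fin r) ℝ) (D : Matrix (Fin r) (Fin r) ℝ)
    (LQ : Matrix (Fin N) (Fin rQ) ℝ) (DQ : Matrix (Fin rQ) (Fin rQ) ℝ)
    (P Q : Matrix (Fin N) (Fin N) ℝ)
    (hP : P = L * D * Lᵀ) (hQ : Q = LQ * DQ * LQᵀ)
    (Ltil : Matrix (Fin N) ((Fin r ⊕ Fin r) ⊕ Fin rQ) ℝ)
    (hLtil : Ltil = Matrix.fromCols (Matrix.fromCols (Aᵀ * L) L) LQ)
    (Dtil : Matrix ((Fin r ⊕ Fin r) ⊕ Fin rQ) ((Fin r ⊕ Fin r) ⊕ Fin rQ) ℝ)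
    (hDtil : Dtil = Matrix.fromBlocks
        (Matrix.fromBlocks 0 D D (-(D * (Lᵀ * S * L) * D))) 0 0 DQ) :
    Aᵀ * P + P * A + Q - P * S * P = Ltil * Dtil * Ltilᵀ := by
  subst hP hQ hLtil hDtil
  simp only [Matrix.transpose_fromCols, Matrix.fromCols_mul_fromBlocks,
    Matrix.fromCols_mul_fromRows, Matrix.mul_zero, add_zero, zero_add,
    Matrix.transpose_mul, Matrix.transpose_transpose, Matrix.mul_neg, Matrix.neg_mul,
    Matrix.add_mul, Matrix.mul_assoc]
  abel
end

section
/- Let N be a positive integer, let S, P₀ ∈ ℝ^{N×N}, and let s, t ∈ ℝ be such that I + t·P₀S and I + (s + t)·P₀S are both invertible. Set P₁ = (I + t·P₀S)⁻¹·P₀. Then I + s·P₁S is invertible, with (I + t·P₀S)·(I + s·P₁S) = I + (s + t)·P₀S, and the flow property (I + s·P₁S)⁻¹·P₁ = (I + (s + t)·P₀S)⁻¹·P₀ holds. -/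
open Matrix

/-- Flow property of the closed-form solution operator `T_G(t)P₀ = (I + t·P₀S)⁻¹P₀`
of the nonlinear subproblem `Ṗ = −PSP`: with `P₁ = (I + t·P₀S)⁻¹P₀`, the matrix
`I + s·P₁S` is invertible, `(I + t·P₀S)(I + s·P₁S) = I + (s+t)·P₀S`, and
`(I + s·P₁S)⁻¹P₁ = (I + (s+t)·P₀S)⁻¹P₀`. -/
theorem nonlinear_subproblem_flow_property
    (N : ℕ) (hN : 0 < N) (S P₀ : Matrix (Fin N) (Fin N) ℝ) (s t : ℝ)
    (ht : IsUnit (1 + t • (P₀ * S))) (hst : IsUnit (1 + (s + t) • (P₀ * S)))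
    (P₁ : Matrix (Fin N) (Fin N) ℝ) (hP₁ : P₁ = (1 + t • (P₀ * S))⁻¹ * P₀) :
    IsUnit (1 + s • (P₁ * S)) ∧
      (1 + t • (P₀ * S)) * (1 + s • (P₁ * S)) = 1 + (s + t) • (P₀ * S) ∧
      (1 + s • (P₁ * S))⁻¹ * P₁ = (1 + (s + t) • (P₀ * S))⁻¹ * P₀ := by
  have hdet := (Matrix.isUnit_iff_isUnit_det _).1 ht
  have h1 : (1 + t • (P₀ * S)) * P₁ = P₀ := by
    rw [hP₁, Matrix.mul_nonsing_inv_cancel_left _ _ hdet]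
  have h2 : (1 + t • (P₀ * S)) * (1 + s • (P₁ * S)) = 1 + (s + t) • (P₀ * S) := by
    rw [mul_add, mul_one, mul_smul_comm, ← mul_assoc, h1, add_smul]
    abel
  refine ⟨?_, h2, ?_⟩
  · rw [← h2] at hst
    exact (ht.mul_left_iff).1 hst
  · rw [← h2, Matrix.mul_inv_rev, Matrix.mul_assoc, ← hP₁]
end

section
/- Let N be a positive integer, let A, Q, P₀ ∈ ℝ^{N×N}, and define F(t, X) = exp(tAᵀ)·X·exp(tA) + ∫₀ᵗ exp(uAᵀ)·Q·exp(uA) du for t ∈ ℝ and X ∈ ℝ^{N×N}. Then for all s, t ∈ ℝ, F(s, F(t, P₀)) = F(s + t, P₀). -/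
open Matrix

attribute [local instance] Matrix.frobeniusNormedAddCommGroup Matrix.frobeniusNormedSpace

/-- Flow (semigroup) property of the closed-form solution operator
`F(t, X) = exp(tAᵀ)·X·exp(tA) + ∫₀ᵗ exp(uAᵀ)·Q·exp(uA) du` of the affine
subproblem `Ṗ = AᵀP + PA + Q`: `F(s, F(t, P₀)) = F(s + t, P₀)`. -/
theorem affine_subproblem_flow_property
    (N : ℕ) (hN : 0 < N) (A Q P₀ : Matrix (Fin N) (Fin N) ℝ)
    (F : ℝ → Matrix (Fin N) (Fin N) ℝ → Matrix (Fin N) (Fin N) ℝ)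
    (hF : ∀ (t : ℝ) (X : Matrix (Fin N) (Fin N) ℝ), F t X =
        NormedSpace.exp (t • Aᵀ) * X * NormedSpace.exp (t • A)
          + ∫ u in (0:ℝ)..t,
              NormedSpace.exp (u • Aᵀ) * Q * NormedSpace.exp (u • A)) :
    ∀ s t : ℝ, F s (F t P₀) = F (s + t) P₀ := by
  intro s t
  have hcont : ∀ B : Matrix (Fin N) (Fin N) ℝ,
      Continuous fun u : ℝ => NormedSpace.exp (u • B) := by
    intro B
    letI : NormedRing (Matrix (Fin N) (Fin N) ℝ) := Matrix.frobeniusNormedRing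
    letI : NormedAlgebra ℝ (Matrix (Fin N) (Fin N) ℝ) := Matrix.frobeniusNormedAlgebra
    letI : NormedAlgebra ℚ (Matrix (Fin N) (Fin N) ℝ) := NormedAlgebra.restrictScalars ℚ ℝ _
    exact NormedSpace.exp_continuous.comp (continuous_id.smul continuous_const)
  have hadd : ∀ (B : Matrix (Fin N) (Fin N) ℝ) (a b : ℝ),
      NormedSpace.exp ((a + b) • B) = NormedSpace.exp (a • B) * NormedSpace.exp (b • B) := by
    intro B a b
    rw [add_smul]
    exact Matrix.exp_add_of_commute _ _ (((Commute.refl B).smul_left a).smul_right b)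
  have hG : Continuous fun u : ℝ =>
      NormedSpace.exp (u • Aᵀ) * Q * NormedSpace.exp (u • A) :=
    ((hcont Aᵀ).matrix_mul continuous_const).matrix_mul (hcont A)
  have hlin : NormedSpace.exp (s • Aᵀ) * (∫ u in (0:ℝ)..t,
        NormedSpace.exp (u • Aᵀ) * Q * NormedSpace.exp (u • A)) * NormedSpace.exp (s • A)
      = ∫ u in (0:ℝ)..t, NormedSpace.exp (s • Aᵀ) *
        (NormedSpace.exp (u • Aᵀ) * Q * NormedSpace.exp (u • A)) * NormedSpace.exp (s • A) := by
    let L : Matrix (Fin N) (Fin N) ℝ →L[ℝ] Matrix (Fin N) (Fin N) ℝ :=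
      LinearMap.toContinuousLinearMap
        ((LinearMap.mulRight ℝ (NormedSpace.exp (s • A))).comp
          (LinearMap.mulLeft ℝ (NormedSpace.exp (s • Aᵀ))))
    exact (L.intervalIntegral_comp_comm (hG.intervalIntegrable 0 t)).symm
  have hshift : (∫ u in (0:ℝ)..t, NormedSpace.exp (s • Aᵀ) *
        (NormedSpace.exp (u • Aᵀ) * Q * NormedSpace.exp (u • A)) * NormedSpace.exp (s • A))
      = ∫ u in s..(s + t), NormedSpace.exp (u • Aᵀ) * Q * NormedSpace.exp (u • A) := by
    have h := intervalIntegral.integral_comp_add_left (a := 0) (b := t)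
      (fun u : ℝ => NormedSpace.exp (u • Aᵀ) * Q * NormedSpace.exp (u • A)) s
    rw [add_zero] at h
    rw [← h]
    congr 1
    funext u
    rw [hadd Aᵀ s u, add_comm s u, hadd A u s]
    simp only [Matrix.mul_assoc]
  have hsplit := intervalIntegral.integral_add_adjacent_intervals
    (hG.intervalIntegrable (μ := MeasureTheory.volume) 0 s)
    (hG.intervalIntegrable (μ := MeasureTheory.volume) s (s + t))
  rw [hF s, hF t, hF (s + t), ← hsplit, Matrix.mul_add, Matrix.add_mul, hlin, hshift,
    hadd Aᵀ s t, add_comm s t, hadd A t s]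
  simp only [Matrix.mul_assoc]
  abel
end
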